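/- arXiv:1511.03872 — 7 statements merged into one kernel-verified Lean document; each statement's English description precedes it below -/
import Mathlib

section
/- A positive integer k can be written as k = x² + y² with positive integers x < y (i.e., L₂(k) > 0) if and only if the following hold: (1) k ≥ 5 and every prime p with p ≡ 3 (mod 4) occurs to an even power in the prime factorization of k; and (2) if k = m² or k = 2m² for some positive integer m, then the number of positive divisors d of k with d ≡ 1 (mod 4) exceeds the number of positive divisors d of k with d ≡ 3 (mod 4) by more than 1. -/
/-- Number of ordered pairs of positive integers `x < y` with `x² + y² = k`. -/
noncomputable def L2 (k : ℕ) : ℕ :=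
  {p : ℕ × ℕ | 0 < p.1 ∧ p.1 < p.2 ∧ p.1 ^ 2 + p.2 ^ 2 = k}.ncard

/-- Number of ordered pairs of integers with `x² + y² = k`. -/
noncomputable def N2 (k : ℕ) : ℕ :=
  {p : ℤ × ℤ | p.1 ^ 2 + p.2 ^ 2 = (k : ℤ)}.ncard

/-- Number of ordered pairs of integers with `x² + 2y² = k`. -/
noncomputable def N2' (k : ℕ) : ℕ :=
  {p : ℤ × ℤ | p.1 ^ 2 + 2 * p.2 ^ 2 = (k : ℤ)}.ncard

/-- Number of ordered triples of positive integers `x < y < z` with `x² + y² + z² = k`. -/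
noncomputable def L3 (k : ℕ) : ℕ :=
  {t : ℕ × ℕ × ℕ | 0 < t.1 ∧ t.1 < t.2.1 ∧ t.2.1 < t.2.2 ∧
    t.1 ^ 2 + t.2.1 ^ 2 + t.2.2 ^ 2 = k}.ncard

/-- Number of ordered triples of integers with `x² + y² + z² = k`. -/
noncomputable def N3 (k : ℕ) : ℕ :=
  {t : ℤ × ℤ × ℤ | t.1 ^ 2 + t.2.1 ^ 2 + t.2.2 ^ 2 = (k : ℤ)}.ncard

/-- The difference of the numbers of divisors congruent to `1` and to `3` modulo `4`. -/
noncomputable def chiSum (n : ℕ) : ℤ := ∑ d ∈ n.divisors, ZMod.χ₄ (d : ZMod 4)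

lemma chiSum_eq (n : ℕ) : chiSum n =
    ((n.divisors.filter fun d => d % 4 = 1).card : ℤ) -
      ((n.divisors.filter fun d => d % 4 = 3).card : ℤ) := by
  unfold chiSum
  rw [Finset.card_filter, Finset.card_filter]
  push_cast
  rw [← Finset.sum_sub_distrib]
  refine Finset.sum_congr rfl fun d _ => ?_
  rw [ZMod.χ₄_nat_eq_if_mod_four]
  have : d % 4 < 4 := Nat.mod_lt _ (by norm_num)
  split_ifs <;> first | rfl | omega

lemma chiSum_mul {a b : ℕ} (h : a.Coprime b) : chiSum (a * b) = chiSum a * chiSum b := by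
  have key := (DirichletCharacter.isMultiplicative_toArithmeticFunction
    (N := 4) (R := ℤ) ZMod.χ₄).mul ArithmeticFunction.isMultiplicative_zeta.natCast
  have e : ∀ n, chiSum n = (toArithmeticFunction (fun n : ℕ => ZMod.χ₄ (n : ZMod 4)) *
      (ArithmeticFunction.zeta : ArithmeticFunction ℤ)) n := by
    intro n
    rw [ArithmeticFunction.coe_mul_zeta_apply]
    refine Finset.sum_congr rfl fun d hd => ?_
    have : d ≠ 0 := (Nat.pos_of_mem_divisors hd).ne'
    simp [toArithmeticFunction, this]
  rw [e, e, e]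
  exact key.map_mul_of_coprime h

lemma chiSum_two_mul_sq (m : ℕ) (hm : 0 < m) : chiSum (2 * m ^ 2) = chiSum (m ^ 2) := by
  have hh : ∀ r, r % 2 = 1 → ((2 * m ^ 2).divisors.filter fun d => d % 4 = r) =
      ((m ^ 2).divisors.filter fun d => d % 4 = r) := by
    intro r hr
    ext d
    simp only [Finset.mem_filter, Nat.mem_divisors]
    constructor
    · rintro ⟨⟨h1, -⟩, h2⟩
      refine ⟨⟨?_, by positivity⟩, h2⟩
      have : d.Coprime 2 := by
        rw [Nat.coprime_two_right]
        rw [Nat.odd_iff]; omega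
      exact this.dvd_of_dvd_mul_left h1
    · rintro ⟨⟨h1, -⟩, h2⟩
      exact ⟨⟨h1.mul_left 2, by positivity⟩, h2⟩
  rw [chiSum_eq, chiSum_eq, hh 1 rfl, hh 3 rfl]

lemma chiSum_sq (m : ℕ) (hm : 0 < m) : 1 ≤ chiSum (m ^ 2) ∧
    (1 < chiSum (m ^ 2) ↔ ∃ p : ℕ, p.Prime ∧ p % 4 = 1 ∧ p ∣ m) := by
  induction m using Nat.recOnPosPrimePosCoprime with
  | zero => omega
  | one =>
    have : chiSum (1 ^ 2) = 1 := by simp [chiSum]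
    rw [this]
    refine ⟨le_rfl, by simp, ?_⟩
    rintro ⟨p, hp, -, h⟩
    exact absurd (Nat.dvd_one.mp h) hp.one_lt.ne'
  | prime_pow p n hp hn =>
    have hs : chiSum ((p ^ n) ^ 2) = ∑ i ∈ Finset.range (2 * n + 1), (ZMod.χ₄ (p : ZMod 4)) ^ i := by
      unfold chiSum
      rw [← pow_mul, Nat.sum_divisors_prime_pow hp, mul_comm n 2]
      refine Finset.sum_congr rfl fun i _ => ?_
      rw [Nat.cast_pow, map_pow]
    have hex : (∃ q : ℕ, q.Prime ∧ q % 4 = 1 ∧ q ∣ p ^ n) ↔ p % 4 = 1 := by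
      constructor
      · rintro ⟨q, hq, h1, h2⟩
        rw [← (Nat.prime_dvd_prime_iff_eq hq hp).mp (hq.dvd_of_dvd_pow h2)]
        exact h1
      · intro h
        exact ⟨p, hp, h, dvd_pow_self p hn.ne'⟩
    rw [hex, hs]
    rcases (by omega : p % 2 = 0 ∨ p % 4 = 1 ∨ p % 4 = 3) with h | h | h
    · have : ZMod.χ₄ (p : ZMod 4) = 0 := by
        rw [ZMod.χ₄_nat_eq_if_mod_four, if_pos h]
      rw [this, Finset.sum_range_succ']
      simp
      omega
    · rw [ZMod.χ₄_nat_one_mod_four h]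
      simp
      omega
    · rw [ZMod.χ₄_nat_three_mod_four h, neg_one_geom_sum]
      have : ¬ Even (2 * n + 1) := by simp
      rw [if_neg this]
      simp
      omega
  | coprime a b ha hb hab iha ihb =>
    obtain ⟨a1, a2⟩ := iha (by omega)
    obtain ⟨b1, b2⟩ := ihb (by omega)
    rw [mul_pow, chiSum_mul (hab.pow 2 2)]
    have hex : (∃ q : ℕ, q.Prime ∧ q % 4 = 1 ∧ q ∣ a * b) ↔
        (1 < chiSum (a ^ 2) ∨ 1 < chiSum (b ^ 2)) := by
      rw [a2, b2]
      constructor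
      · rintro ⟨q, hq, h1, h2⟩
        rcases hq.dvd_mul.mp h2 with h | h
        · exact Or.inl ⟨q, hq, h1, h⟩
        · exact Or.inr ⟨q, hq, h1, h⟩
      · rintro (⟨q, hq, h1, h⟩ | ⟨q, hq, h1, h⟩)
        · exact ⟨q, hq, h1, h.mul_right b⟩
        · exact ⟨q, hq, h1, h.mul_left a⟩
    rw [hex]
    refine ⟨by nlinarith, ?_, ?_⟩
    · intro h
      by_contra! hc
      have e1 : chiSum (a ^ 2) = 1 := le_antisymm hc.1 a1
      have e2 : chiSum (b ^ 2) = 1 := le_antisymm hc.2 b1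
      rw [e1, e2] at h
      omega
    · rintro (h | h) <;> nlinarith

/-- `k` is a sum of two distinct positive squares. -/
def IsRep (k : ℕ) : Prop := ∃ x y : ℕ, 0 < x ∧ x < y ∧ x ^ 2 + y ^ 2 = k

lemma isRep_of {k x y : ℕ} (hx : 0 < x) (hy : 0 < y) (hne : x ≠ y) (h : x ^ 2 + y ^ 2 = k) :
    IsRep k := by
  rcases lt_or_gt_of_ne hne with h1 | h1
  · exact ⟨x, y, hx, h1, h⟩
  · exact ⟨y, x, hy, h1, by rw [← h]; ring⟩

lemma L2_pos_iff_isRep (k : ℕ) : 0 < L2 k ↔ IsRep k := by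
  unfold L2
  have hfin : {p : ℕ × ℕ | 0 < p.1 ∧ p.1 < p.2 ∧ p.1 ^ 2 + p.2 ^ 2 = k}.Finite := by
    refine (Set.finite_Iic ((k, k) : ℕ × ℕ)).subset ?_
    rintro ⟨x, y⟩ ⟨h1, h2, h3⟩
    simp only at h1 h2 h3
    constructor <;> simp only <;> nlinarith
  rw [Set.ncard_pos hfin]
  constructor
  · rintro ⟨⟨x, y⟩, h1, h2, h3⟩
    exact ⟨x, y, h1, h2, h3⟩
  · rintro ⟨x, y, h1, h2, h3⟩
    exact ⟨(x, y), h1, h2, h3⟩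

lemma isRep_two_mul_sq (m : ℕ) : IsRep (2 * m ^ 2) ↔ IsRep (m ^ 2) := by
  constructor
  · rintro ⟨x, y, hx, hxy, h⟩
    have hpar : x % 2 = y % 2 := by
      have h2 : (x ^ 2 + y ^ 2) % 2 = 0 := by omega
      rcases Nat.mod_two_eq_zero_or_one x with h3 | h3 <;>
        rcases Nat.mod_two_eq_zero_or_one y with h4 | h4 <;>
        simp [Nat.add_mod, Nat.pow_mod, h3, h4] at h2 ⊢
    obtain ⟨v, hv⟩ : ∃ v, y = x + 2 * v := ⟨(y - x) / 2, by omega⟩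
    subst hv
    refine ⟨v, x + v, by omega, by omega, ?_⟩
    nlinarith
  · rintro ⟨u, v, hu, huv, h⟩
    obtain ⟨w, rfl⟩ := Nat.exists_eq_add_of_lt huv
    refine ⟨w + 1, 2 * u + w + 1, by omega, by omega, ?_⟩
    rw [← h]; ring

lemma isRep_sq_of_prime (m : ℕ) (hm : 0 < m)
    (h : ∃ p : ℕ, p.Prime ∧ p % 4 = 1 ∧ p ∣ m) : IsRep (m ^ 2) := by
  obtain ⟨p, hp, h1, n, rfl⟩ := h
  have := Fact.mk hp
  obtain ⟨a, b, hab⟩ := Nat.Prime.sq_add_sq (p := p) (by omega)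
  wlog hle : a ≤ b generalizing a b
  · exact this b a (by rw [← hab]; ring) (by omega)
  have hn : 0 < n := Nat.pos_of_mul_pos_left hm
  have ha : 0 < a := by
    rcases Nat.eq_zero_or_pos a with rfl | h
    · exfalso
      apply hp.not_isSquare
      exact ⟨b, by rw [← hab]; ring⟩
    · exact h
  have hlt : a < b := by
    rcases hle.lt_or_eq with h | rfl
    · exact h
    · omega
  obtain ⟨c, rfl⟩ := Nat.exists_eq_add_of_lt hlt
  have hodd : c % 2 = 0 := by
    rcases Nat.mod_two_eq_zero_or_one c with h | h
    · exact h
    · have : p = 2 * (a ^ 2 + a * (c + 1)) + (c + 1) ^ 2 := by rw [← hab]; ring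
      have h2 : (c + 1) ^ 2 % 2 = 0 := by simp [Nat.pow_mod, Nat.add_mod, h]
      omega
  refine isRep_of (x := n * ((c + 1) * (2 * a + c + 1))) (y := n * (2 * a * (a + c + 1)))
    (by positivity) (by positivity) ?_ ?_
  · intro he
    have he := Nat.eq_of_mul_eq_mul_left hn he
    have h3 : ((c + 1) * (2 * a + c + 1)) % 2 = 1 := by
      have e1 : (c + 1) % 2 = 1 := by omega
      have e2 : (2 * a + c + 1) % 2 = 1 := by omega
      rw [Nat.mul_mod, e1, e2]
    rw [he, mul_assoc] at h3
    omega
  · rw [← hab]; ring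

lemma prime_of_isRep_sq (m : ℕ) : 0 < m → IsRep (m ^ 2) →
    ∃ p : ℕ, p.Prime ∧ p % 4 = 1 ∧ p ∣ m := by
  induction m using Nat.strong_induction_on with
  | _ m ih =>
  rintro hm ⟨x, y, hx, hxy, h⟩
  by_cases h1 : m = 1
  · subst h1; nlinarith
  obtain ⟨q, hq, n, rfl⟩ := Nat.exists_prime_and_dvd h1
  have hn : 0 < n := Nat.pos_of_mul_pos_left hm
  by_cases hq1 : q % 4 = 1
  · exact ⟨q, hq, hq1, dvd_mul_right q n⟩
  have hd : q ∣ x ∧ q ∣ y := by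
    rcases hq.eq_two_or_odd with rfl | hodd
    · have h2 : (x ^ 2 + y ^ 2) % 4 = 0 := by
        rw [h, mul_pow]; omega
      have hx4 : x % 4 < 4 := Nat.mod_lt _ (by norm_num)
      have hy4 : y % 4 < 4 := Nat.mod_lt _ (by norm_num)
      rw [Nat.add_mod, Nat.pow_mod, Nat.pow_mod y] at h2
      generalize ha : x % 4 = a at *
      generalize hb : y % 4 = b at *
      interval_cases a <;> interval_cases b <;> first | omega | (simp at h2)
    · have := Fact.mk hq
      have hz : (x : ZMod q) ^ 2 = - (y : ZMod q) ^ 2 := by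
        have := congrArg (Nat.cast : ℕ → ZMod q) h
        push_cast at this
        rw [ZMod.natCast_self q, zero_mul] at this
        rw [eq_neg_iff_add_eq_zero, this]; simp
      have hy : (y : ZMod q) = 0 := by
        by_contra hy
        exact ZMod.mod_four_ne_three_of_sq_eq_neg_sq' hy hz (by omega)
      rw [hy] at hz
      have hx : (x : ZMod q) = 0 := by simpa using hz
      exact ⟨(ZMod.natCast_eq_zero_iff _ _).mp hx, (ZMod.natCast_eq_zero_iff _ _).mp hy⟩
  obtain ⟨⟨u, rfl⟩, ⟨v, rfl⟩⟩ := hd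
  have hq0 := hq.pos
  obtain ⟨p, hp, hp1, hpn⟩ := ih n (by nlinarith [hq.two_le]) hn
    ⟨u, v, Nat.pos_of_mul_pos_left hx, Nat.lt_of_mul_lt_mul_left hxy, by
      apply Nat.eq_of_mul_eq_mul_left (pow_pos hq0 2)
      nlinarith⟩
  exact ⟨p, hp, hp1, hpn.mul_left q⟩

lemma isRep_iff_chiSum {k m : ℕ} (hm : 0 < m) (h : k = m ^ 2 ∨ k = 2 * m ^ 2) :
    IsRep k ↔ 1 < chiSum k := by
  have h0 : IsRep (m ^ 2) ↔ 1 < chiSum (m ^ 2) := by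
    rw [(chiSum_sq m hm).2]
    exact ⟨prime_of_isRep_sq m hm, isRep_sq_of_prime m hm⟩
  rcases h with rfl | rfl
  · exact h0
  · rw [isRep_two_mul_sq, chiSum_two_mul_sq m hm, h0]

theorem L2_pos_iff (k : ℕ) (hk : 0 < k) :
    0 < L2 k ↔
      (5 ≤ k ∧ ∀ p : ℕ, p.Prime → p % 4 = 3 → Even (k.factorization p)) ∧
      ((∃ m : ℕ, 0 < m ∧ (k = m ^ 2 ∨ k = 2 * m ^ 2)) →
        ((k.divisors.filter fun d => d % 4 = 1).card >
          (k.divisors.filter fun d => d % 4 = 3).card + 1)) := by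
  rw [L2_pos_iff_isRep]
  have hD : ((k.divisors.filter fun d => d % 4 = 1).card >
          (k.divisors.filter fun d => d % 4 = 3).card + 1) ↔ 1 < chiSum k := by
    rw [chiSum_eq]; omega
  rw [hD]
  constructor
  · intro hr
    refine ⟨⟨?_, ?_⟩, ?_⟩
    · obtain ⟨x, y, hx, hxy, h⟩ := hr
      nlinarith
    · obtain ⟨x, y, hx, hxy, h⟩ := hr
      intro p hp hp3
      by_cases hpk : p ∣ k
      · rw [Nat.factorization_def k hp]
        exact Nat.eq_sq_add_sq_iff.mp ⟨x, y, h.symm⟩ p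
          (Nat.mem_primeFactors.mpr ⟨hp, hpk, hk.ne'⟩) hp3
      · rw [Nat.factorization_eq_zero_of_not_dvd hpk]
        exact Even.zero
    · rintro ⟨m, hm, h⟩
      exact (isRep_iff_chiSum hm h).mp hr
  · rintro ⟨⟨-, h2⟩, h3⟩
    by_cases hex : ∃ m : ℕ, 0 < m ∧ (k = m ^ 2 ∨ k = 2 * m ^ 2)
    · obtain ⟨m, hm, h⟩ := hex
      exact (isRep_iff_chiSum hm h).mpr (h3 ⟨m, hm, h⟩)
    · obtain ⟨x, y, hxy⟩ := Nat.eq_sq_add_sq_iff.mpr (fun q hq hq3 => by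
        have hp := Nat.prime_of_mem_primeFactors hq
        rw [← Nat.factorization_def k hp]
        exact h2 q hp hq3)
      have hx : 0 < x := by
        rcases Nat.eq_zero_or_pos x with rfl | h
        · have hk' : k = y ^ 2 := by rw [hxy]; ring
          exact absurd ⟨y, Nat.pos_of_ne_zero (by rintro rfl; simp at hk'; omega), Or.inl hk'⟩ hex
        · exact h
      have hy : 0 < y := by
        rcases Nat.eq_zero_or_pos y with rfl | h
        · have hk' : k = x ^ 2 := by rw [hxy]; ring
          exact absurd ⟨x, hx, Or.inl hk'⟩ hex
        · exact h
      refine isRep_of hx hy ?_ hxy.symm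
      rintro rfl
      exact hex ⟨x, hx, Or.inr (by rw [hxy]; ring)⟩
end

section
/- Let k be a positive integer such that k ≠ m², k ≠ 2m², and k ≠ 3m² for every positive integer m. Then 48·L₃(k) = N₃(k) − 3·N₂(k) − 6·N₂′(k). -/
/-- Splitting a count along a predicate. -/
theorem ncard_split {α : Type*} (p q r : α → Prop) (hf : {t | p t}.Finite)
    (hq : ∀ t, q t → p t) (hr : ∀ t, r t → p t) (hp : ∀ t, p t → (q t ∨ r t))
    (hd : ∀ t, q t → r t → False) :
    {t | p t}.ncard = {t | q t}.ncard + {t | r t}.ncard := by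
  have e : {t | p t} = {t | q t} ∪ {t | r t} := by
    ext t
    exact ⟨hp t, fun h => h.elim (hq t) (hr t)⟩
  rw [e, Set.ncard_union_eq (s := {t | q t}) (t := {t | r t}) ?_ (hf.subset hq) (hf.subset hr)]
  rw [Set.disjoint_left]
  exact fun t h1 h2 => hd t h1 h2

/-- Transport of a count along mutually inverse maps. -/
theorem ncard_transport {α β : Type*} (p : α → Prop) (q : β → Prop) (f : α → β) (g : β → α)
    (hf : ∀ t, p t → q (f t)) (hg : ∀ t, q t → p (g t))
    (hgf : ∀ t, p t → g (f t) = t) (hfg : ∀ t, q t → f (g t) = t) :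
    {t | p t}.ncard = {t | q t}.ncard := by
  refine Set.ncard_congr (fun a _ => f a) hf ?_ ?_
  · intro a b ha hb h
    rw [← hgf a ha, ← hgf b hb, h]
  · intro b hb
    exact ⟨g b, hg b hb, hfg b hb⟩

abbrev T := ℤ × ℤ × ℤ

def S (k : ℕ) (t : T) : Prop := t.1 ^ 2 + t.2.1 ^ 2 + t.2.2 ^ 2 = (k : ℤ)

theorem S_finite (k : ℕ) : {t | S k t}.Finite := by
  have h : (Set.Icc (-(k:ℤ)) k ×ˢ (Set.Icc (-(k:ℤ)) k ×ˢ Set.Icc (-(k:ℤ)) k)).Finite :=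
    (Set.finite_Icc _ _).prod ((Set.finite_Icc _ _).prod (Set.finite_Icc _ _))
  refine h.subset ?_
  rintro ⟨x, y, z⟩ h
  simp only [S, Set.mem_ofPred_eq] at h
  have b : ∀ w : ℤ, w ^ 2 ≤ k → -(k:ℤ) ≤ w ∧ w ≤ k := by
    intro w hw
    constructor <;> nlinarith [Int.le_self_sq w, Int.le_self_sq (-w)]
  have hx := b x (by nlinarith [sq_nonneg y, sq_nonneg z])
  have hy := b y (by nlinarith [sq_nonneg x, sq_nonneg z])
  have hz := b z (by nlinarith [sq_nonneg y, sq_nonneg x])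
  simp only [Set.mem_prod, Set.mem_Icc]
  exact ⟨hx, hy, hz⟩

theorem S_nat (k : ℕ) (x y z : ℤ) (h : S k (x, y, z)) :
    x.natAbs ^ 2 + y.natAbs ^ 2 + z.natAbs ^ 2 = k := by
  zify
  simpa [S] using h

theorem fin_and (k : ℕ) (q : T → Prop) : {t | S k t ∧ q t}.Finite :=
  (S_finite k).subset fun _ h => h.1

/-- Halving along an involution. -/
theorem halve (k : ℕ) (q : T → Prop) (r : T → Prop) (σ : T → T) (hσ : ∀ t, σ (σ t) = t)
    (hS : ∀ t, S k t → S k (σ t)) (hq : ∀ t, q t → q (σ t))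
    (hr : ∀ t, q t → (r t ↔ ¬ r (σ t))) :
    {t | S k t ∧ q t}.ncard = 2 * {t | S k t ∧ q t ∧ r t}.ncard := by
  rw [ncard_split (fun t => S k t ∧ q t) (fun t => S k t ∧ q t ∧ r t)
    (fun t => S k t ∧ q t ∧ ¬ r t) (fin_and k q) (by tauto) (by tauto) (by tauto) (by tauto),
    ncard_transport (fun t => S k t ∧ q t ∧ ¬ r t) (fun t => S k t ∧ q t ∧ r t) σ σ]
  · ring
  · rintro t ⟨a, b, c⟩
    exact ⟨hS t a, hq t b, by have := hr t b; tauto⟩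
  · rintro t ⟨a, b, c⟩
    exact ⟨hS t a, hq t b, by have := hr t b; tauto⟩
  · exact fun t _ => hσ t
  · exact fun t _ => hσ t

theorem ordered_count (k : ℕ) :
    {t | S k t ∧ (0 < t.1.natAbs ∧ t.1.natAbs < t.2.1.natAbs ∧ t.2.1.natAbs < t.2.2.natAbs)}.ncard
      = 8 * L3 k := by
  rw [halve k _ (fun t => 0 < t.1) (fun t => (-t.1, t.2.1, t.2.2)) (by simp)
      (by simp [S]) (by simp) (by rintro ⟨x, y, z⟩; simp; omega),
    halve k _ (fun t => 0 < t.2.1) (fun t => (t.1, -t.2.1, t.2.2)) (by simp)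
      (by simp [S]) (by simp) (by rintro ⟨x, y, z⟩; simp; omega),
    halve k _ (fun t => 0 < t.2.2) (fun t => (t.1, t.2.1, -t.2.2)) (by simp)
      (by simp [S]) (by simp) (by rintro ⟨x, y, z⟩; simp; omega)]
  unfold L3
  rw [← mul_assoc, ← mul_assoc]
  congr 1
  refine ncard_transport _ _ (fun t => (t.1.natAbs, t.2.1.natAbs, t.2.2.natAbs))
    (fun t => ((t.1 : ℤ), (t.2.1 : ℤ), (t.2.2 : ℤ))) ?_ ?_ ?_ ?_
  · rintro ⟨x, y, z⟩ ⟨h, h'⟩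
    have := S_nat k x y z h
    simp only at *
    tauto
  · rintro ⟨x, y, z⟩ ⟨a, b, c, d⟩
    simp only [S] at *
    refine ⟨by exact_mod_cast d, ?_⟩
    omega
  · rintro ⟨x, y, z⟩ ⟨h, h'⟩
    simp only [Prod.mk.injEq] at *
    omega
  · rintro ⟨x, y, z⟩ _
    simp

theorem zero_count (k : ℕ) : {t | S k t ∧ t.1.natAbs = 0}.ncard = N2 k := by
  unfold N2
  refine ncard_transport _ _ (fun t => (t.2.1, t.2.2)) (fun p => (0, p.1, p.2)) ?_ ?_ ?_ ?_
  · rintro ⟨x, y, z⟩ ⟨h, h'⟩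
    simp only [S, Int.natAbs_eq_zero] at *
    subst h'
    linarith
  · rintro ⟨x, y⟩ h
    simpa [S] using h
  · rintro ⟨x, y, z⟩ ⟨h, h'⟩
    simp only [Int.natAbs_eq_zero] at h'
    simp [h']
  · simp

theorem eq_count (k : ℕ) (h1 : ∀ m : ℕ, k ≠ m ^ 2) :
    {t | S k t ∧ t.1.natAbs = t.2.1.natAbs}.ncard = 2 * N2' k := by
  have hne : ∀ x y z, S k (x, y, z) → x.natAbs = y.natAbs → x ≠ 0 := by
    rintro x y z h hxy rfl
    have := S_nat k _ _ _ h
    rw [← hxy] at this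
    exact h1 z.natAbs (by simpa using this.symm)
  rw [ncard_split (fun t => S k t ∧ t.1.natAbs = t.2.1.natAbs) (fun t => S k t ∧ t.1 = t.2.1)
    (fun t => S k t ∧ t.1 = - t.2.1) (fin_and k _) ?_ ?_ ?_ ?_, two_mul]
  · unfold N2'
    congr 1
    · refine ncard_transport _ _ (fun t => (t.2.2, t.2.1)) (fun p => (p.2, p.2, p.1)) ?_ ?_ ?_ ?_
      · rintro ⟨x, y, z⟩ ⟨h, h'⟩
        simp only [S] at *
        subst h'
        linarith
      · rintro ⟨x, y⟩ h
        simp only [S, and_true] at *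
        linarith
      · rintro ⟨x, y, z⟩ ⟨h, h'⟩
        simp_all
      · simp
    · refine ncard_transport _ _ (fun t => (t.2.2, t.2.1)) (fun p => (-p.2, p.2, p.1)) ?_ ?_ ?_ ?_
      · rintro ⟨x, y, z⟩ ⟨h, h'⟩
        simp only [S] at *
        subst h'
        linarith
      · rintro ⟨x, y⟩ h
        simp only [S, and_true] at *
        linarith
      · rintro ⟨x, y, z⟩ ⟨h, h'⟩
        simp_all
      · simp
  · rintro ⟨x, y, z⟩ ⟨h, h'⟩
    exact ⟨h, by simp only at *; omega⟩
  · rintro ⟨x, y, z⟩ ⟨h, h'⟩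
    exact ⟨h, by simp only at *; omega⟩
  · rintro ⟨x, y, z⟩ ⟨h, h'⟩
    have : x = y ∨ x = -y := by simp only at *; omega
    tauto
  · rintro ⟨x, y, z⟩ ⟨h, h'⟩ ⟨_, h''⟩
    have := hne x y z h (by simp only at *; omega)
    simp only at *
    omega

/-- Permuting the coordinates. -/
theorem perm_count (k : ℕ) (q q' : T → Prop) (f g : T → T) (hfg : ∀ t, f (g t) = t)
    (hgf : ∀ t, g (f t) = t) (hS : ∀ t, S k t ↔ S k (f t)) (hq : ∀ t, q t ↔ q' (f t)) :
    {t | S k t ∧ q t}.ncard = {t | S k t ∧ q' t}.ncard := by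
  refine ncard_transport _ _ f g ?_ ?_ (fun t _ => hgf t) (fun t _ => hfg t)
  · intro t h
    exact ⟨(hS t).1 h.1, (hq t).1 h.2⟩
  · intro t h
    exact ⟨(hS _).2 (by rw [hfg]; exact h.1), (hq _).2 (by rw [hfg]; exact h.2)⟩

theorem card_sum (k : ℕ) (q : T → Prop) [DecidablePred q] :
    {t | S k t ∧ q t}.ncard = ∑ t ∈ (S_finite k).toFinset, if q t then 1 else 0 := by
  rw [← Finset.card_filter, ← Set.ncard_coe_finset]
  congr 1
  ext t
  simp

theorem pointwise (a b c : ℕ) (h1 : ¬ (a = 0 ∧ b = 0)) (h2 : ¬ (a = 0 ∧ c = 0))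
    (h3 : ¬ (b = 0 ∧ c = 0)) (h4 : ¬ (a = 0 ∧ b = c)) (h5 : ¬ (b = 0 ∧ a = c))
    (h6 : ¬ (c = 0 ∧ a = b)) (h7 : ¬ (a = b ∧ b = c)) :
    1 = (if a = 0 then 1 else 0) + (if b = 0 then 1 else 0) + (if c = 0 then 1 else 0)
      + (if a = b then 1 else 0) + (if b = c then 1 else 0) + (if a = c then 1 else 0)
      + (if 0 < a ∧ a < b ∧ b < c then 1 else 0) + (if 0 < a ∧ a < c ∧ c < b then 1 else 0)
      + (if 0 < b ∧ b < a ∧ a < c then 1 else 0) + (if 0 < b ∧ b < c ∧ c < a then 1 else 0)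
      + (if 0 < c ∧ c < a ∧ a < b then 1 else 0) + (if 0 < c ∧ c < b ∧ b < a then 1 else 0) := by
  grind (splits := 30)

theorem fortyeight_L3_generic (k : ℕ) (hk : 0 < k)
    (h1 : ∀ m : ℕ, 0 < m → k ≠ m ^ 2)
    (h2 : ∀ m : ℕ, 0 < m → k ≠ 2 * m ^ 2)
    (h3 : ∀ m : ℕ, 0 < m → k ≠ 3 * m ^ 2) :
    48 * L3 k + 3 * N2 k + 6 * N2' k = N3 k := by
  have g1 : ∀ m : ℕ, k ≠ m ^ 2 := by
    intro m
    rcases Nat.eq_zero_or_pos m with rfl | h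
    · simp; omega
    · exact h1 m h
  have g2 : ∀ m : ℕ, k ≠ 2 * m ^ 2 := by
    intro m
    rcases Nat.eq_zero_or_pos m with rfl | h
    · simp; omega
    · exact h2 m h
  have g3 : ∀ m : ℕ, k ≠ 3 * m ^ 2 := by
    intro m
    rcases Nat.eq_zero_or_pos m with rfl | h
    · simp; omega
    · exact h3 m h
  have hz := zero_count k
  have he := eq_count k g1
  have ho := ordered_count k
  have z2 := (perm_count k (fun t => t.2.1.natAbs = 0) (fun t => t.1.natAbs = 0)
    (fun t => (t.2.1, t.1, t.2.2)) (fun t => (t.2.1, t.1, t.2.2)) (by simp) (by simp)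
    (by intro t; simp only [S]; ring_nf) (by simp)).trans hz
  have z3 := (perm_count k (fun t => t.2.2.natAbs = 0) (fun t => t.1.natAbs = 0)
    (fun t => (t.2.2, t.2.1, t.1)) (fun t => (t.2.2, t.2.1, t.1)) (by simp) (by simp)
    (by intro t; simp only [S]; ring_nf) (by simp)).trans hz
  have e2 := (perm_count k (fun t => t.2.1.natAbs = t.2.2.natAbs)
    (fun t => t.1.natAbs = t.2.1.natAbs)
    (fun t => (t.2.1, t.2.2, t.1)) (fun t => (t.2.2, t.1, t.2.1)) (by simp) (by simp)
    (by intro t; simp only [S]; ring_nf) (by simp)).trans he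
  have e3 := (perm_count k (fun t => t.1.natAbs = t.2.2.natAbs)
    (fun t => t.1.natAbs = t.2.1.natAbs)
    (fun t => (t.1, t.2.2, t.2.1)) (fun t => (t.1, t.2.2, t.2.1)) (by simp) (by simp)
    (by intro t; simp only [S]; ring_nf) (by simp)).trans he
  have o2 := (perm_count k
    (fun t => 0 < t.1.natAbs ∧ t.1.natAbs < t.2.2.natAbs ∧ t.2.2.natAbs < t.2.1.natAbs) _
    (fun t => (t.1, t.2.2, t.2.1)) (fun t => (t.1, t.2.2, t.2.1)) (by simp) (by simp)
    (by intro t; simp only [S]; ring_nf) (by intro t; exact Iff.rfl)).trans ho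
  have o3 := (perm_count k
    (fun t => 0 < t.2.1.natAbs ∧ t.2.1.natAbs < t.1.natAbs ∧ t.1.natAbs < t.2.2.natAbs) _
    (fun t => (t.2.1, t.1, t.2.2)) (fun t => (t.2.1, t.1, t.2.2)) (by simp) (by simp)
    (by intro t; simp only [S]; ring_nf) (by intro t; exact Iff.rfl)).trans ho
  have o4 := (perm_count k
    (fun t => 0 < t.2.1.natAbs ∧ t.2.1.natAbs < t.2.2.natAbs ∧ t.2.2.natAbs < t.1.natAbs) _
    (fun t => (t.2.1, t.2.2, t.1)) (fun t => (t.2.2, t.1, t.2.1)) (by simp) (by simp)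
    (by intro t; simp only [S]; ring_nf) (by intro t; exact Iff.rfl)).trans ho
  have o5 := (perm_count k
    (fun t => 0 < t.2.2.natAbs ∧ t.2.2.natAbs < t.1.natAbs ∧ t.1.natAbs < t.2.1.natAbs) _
    (fun t => (t.2.2, t.1, t.2.1)) (fun t => (t.2.1, t.2.2, t.1)) (by simp) (by simp)
    (by intro t; simp only [S]; ring_nf) (by intro t; exact Iff.rfl)).trans ho
  have o6 := (perm_count k
    (fun t => 0 < t.2.2.natAbs ∧ t.2.2.natAbs < t.2.1.natAbs ∧ t.2.1.natAbs < t.1.natAbs) _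
    (fun t => (t.2.2, t.2.1, t.1)) (fun t => (t.2.2, t.2.1, t.1)) (by simp) (by simp)
    (by intro t; simp only [S]; ring_nf) (by intro t; exact Iff.rfl)).trans ho
  have hN : N3 k = ∑ t ∈ (S_finite k).toFinset, 1 := by
    rw [← Finset.card_eq_sum_ones, ← Set.ncard_coe_finset]
    simp [N3, S]
  have key := Finset.sum_congr (rfl : (S_finite k).toFinset = _) (f := fun _ => 1) fun t ht => by
    refine pointwise t.1.natAbs t.2.1.natAbs t.2.2.natAbs ?_ ?_ ?_ ?_ ?_ ?_ ?_
    all_goals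
      have hs := S_nat k t.1 t.2.1 t.2.2 (by simpa using ht)
      generalize t.1.natAbs = a at hs ⊢
      generalize t.2.1.natAbs = b at hs ⊢
      generalize t.2.2.natAbs = c at hs ⊢
      have := g1 a
      have := g1 b
      have := g1 c
      have := g2 a
      have := g2 b
      have := g2 c
      have := g3 a
      rintro ⟨rfl, rfl⟩
      omega
  simp only [Finset.sum_add_distrib] at key
  rw [card_sum] at hz he ho z2 z3 e2 e3 o2 o3 o4 o5 o6
  rw [hN, key]
  rw [hz, he, ho, z2, z3, e2, e3, o2, o3, o4, o5, o6]
  ring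
end

section
/- Let k be a positive integer with k = m² for some positive integer m. Then 48·L₃(k) = N₃(k) − 3·N₂(k) − 6·N₂′(k) + 18. -/
open Finset in
theorem half_card {α : Type*} [DecidableEq α] (G : Finset α) (P : α → Prop) [DecidablePred P]
    (f : α → α) (hG : ∀ a ∈ G, f a ∈ G) (hf : ∀ a ∈ G, f (f a) = a)
    (hP : ∀ a ∈ G, (P (f a) ↔ ¬ P a)) : #G = 2 * #(G.filter P) := by
  have h1 : #(G.filter P) = #(G.filter (fun a => ¬ P a)) := by
    refine Finset.card_nbij' f f ?_ ?_ ?_ ?_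
    · intro a ha
      simp only [coe_filter, Set.mem_ofPred_eq] at ha ⊢
      exact ⟨hG a ha.1, fun h => ((hP a ha.1).1 h) ha.2⟩
    · intro a ha
      simp only [coe_filter, Set.mem_ofPred_eq] at ha ⊢
      exact ⟨hG a ha.1, (hP a ha.1).2 ha.2⟩
    · intro a ha
      simp only [coe_filter, Set.mem_ofPred_eq] at ha
      exact hf a ha.1
    · intro a ha
      simp only [coe_filter, Set.mem_ofPred_eq] at ha
      exact hf a ha.1
  have h2 := Finset.card_filter_add_card_filter_not (s := G) P
  omega

theorem sq_box (k : ℕ) (x r : ℤ) (hr : 0 ≤ r) (h : x ^ 2 + r = k) :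
    x ∈ Finset.Icc (-(k : ℤ)) k := by
  have h1 : x ≤ x ^ 2 := Int.le_self_sq x
  have h2 : -x ≤ (-x) ^ 2 := Int.le_self_sq (-x)
  rw [neg_sq] at h2
  simp only [Finset.mem_Icc]
  constructor <;> linarith

/-- Integer points on the sphere. -/
noncomputable def sph (k : ℕ) : Finset (ℤ × ℤ × ℤ) :=
  (Finset.Icc (-(k : ℤ)) k ×ˢ Finset.Icc (-(k : ℤ)) k ×ˢ Finset.Icc (-(k : ℤ)) k).filter
    (fun t => t.1 ^ 2 + t.2.1 ^ 2 + t.2.2 ^ 2 = (k : ℤ))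

theorem mem_sph (k : ℕ) (t : ℤ × ℤ × ℤ) :
    t ∈ sph k ↔ t.1 ^ 2 + t.2.1 ^ 2 + t.2.2 ^ 2 = (k : ℤ) := by
  obtain ⟨x, y, z⟩ := t
  simp only [sph, Finset.mem_filter, Finset.mem_product]
  constructor
  · exact fun h => h.2
  · intro h
    refine ⟨⟨sq_box k x (y ^ 2 + z ^ 2) (by positivity) (by linarith),
      sq_box k y (x ^ 2 + z ^ 2) (by positivity) (by linarith),
      sq_box k z (x ^ 2 + y ^ 2) (by positivity) (by linarith)⟩, h⟩

theorem N3_eq (k : ℕ) : N3 k = (sph k).card := by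
  rw [N3, ← Set.ncard_coe_finset]
  congr 1
  ext t
  simp [mem_sph]

/-- A filter of the sphere counted by a parametrised set of pairs. -/
theorem pair_count (k : ℕ) (A : Set (ℤ × ℤ)) (P : ℤ × ℤ × ℤ → Prop) [DecidablePred P]
    (f : ℤ × ℤ → ℤ × ℤ × ℤ) (g : ℤ × ℤ × ℤ → ℤ × ℤ) (hgf : ∀ p, g (f p) = p)
    (h1 : ∀ p ∈ A, f p ∈ sph k ∧ P (f p))
    (h2 : ∀ t ∈ sph k, P t → g t ∈ A ∧ f (g t) = t) :
    ((sph k).filter P).card = A.ncard := by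
  rw [← Set.ncard_coe_finset]
  symm
  refine Set.ncard_congr (fun p _ => f p) ?_ ?_ ?_
  · intro p hp
    simpa using h1 p hp
  · intro p q _ _ h
    have := congrArg g h
    simpa [hgf] using this
  · intro t ht
    simp only [Finset.coe_filter, Set.mem_ofPred_eq] at ht
    exact ⟨g t, (h2 t ht.1 ht.2).1, (h2 t ht.1 ht.2).2⟩

/-- Generic triples: nonzero with distinct absolute values. -/
def Good (t : ℤ × ℤ × ℤ) : Prop :=
  t.1 ≠ 0 ∧ t.2.1 ≠ 0 ∧ t.2.2 ≠ 0 ∧ t.1 ≠ t.2.1 ∧ t.1 ≠ -t.2.1 ∧ t.1 ≠ t.2.2 ∧ t.1 ≠ -t.2.2 ∧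
    t.2.1 ≠ t.2.2 ∧ t.2.1 ≠ -t.2.2

instance : DecidablePred Good := fun t => by unfold Good; infer_instance

theorem L3_eq (k : ℕ) : L3 k = ((sph k).filter
    (fun t => 0 < t.1 ∧ t.1 < t.2.1 ∧ t.2.1 < t.2.2)).card := by
  rw [L3, ← Set.ncard_coe_finset]
  refine Set.ncard_congr (fun p _ => ((p.1 : ℤ), (p.2.1 : ℤ), (p.2.2 : ℤ))) ?_ ?_ ?_
  · rintro ⟨x, y, z⟩ ⟨h1, h2, h3, h4⟩
    simp only [Finset.coe_filter, Set.mem_ofPred_eq, mem_sph] at *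
    exact ⟨by exact_mod_cast h4, by omega, by omega, by omega⟩
  · rintro ⟨x, y, z⟩ ⟨x', y', z'⟩ _ _ h
    simpa using h
  · rintro ⟨x, y, z⟩ h
    simp only [Finset.coe_filter, Set.mem_ofPred_eq, mem_sph] at h
    obtain ⟨h0, h1, h2, h3⟩ := h
    lift x to ℕ using by omega
    lift y to ℕ using by omega
    lift z to ℕ using by omega
    exact ⟨(x, y, z), ⟨by simpa using h1, by simpa using h2, by simpa using h3,
      by exact_mod_cast h0⟩, rfl⟩

open Finset in
theorem good_card (k : ℕ) : #((sph k).filter Good) = 48 * L3 k := by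
  rw [L3_eq]
  rw [half_card ((sph k).filter Good) (fun t => 0 < t.1) (fun t => (-t.1, t.2.1, t.2.2))
    (by rintro ⟨x, y, z⟩ h; simp only [mem_filter, mem_sph, Good, neg_sq] at *; omega)
    (by rintro ⟨x, y, z⟩ h; simp)
    (by rintro ⟨x, y, z⟩ h; simp only [mem_filter, mem_sph, Good] at *; omega)]
  rw [half_card (((sph k).filter Good).filter _) (fun t => 0 < t.2.1) (fun t => (t.1, -t.2.1, t.2.2))
    (by rintro ⟨x, y, z⟩ h; simp only [mem_filter, mem_sph, Good, neg_sq] at *; omega)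
    (by rintro ⟨x, y, z⟩ h; simp)
    (by rintro ⟨x, y, z⟩ h; simp only [mem_filter, mem_sph, Good] at *; omega)]
  rw [half_card ((((sph k).filter Good).filter _).filter _) (fun t => 0 < t.2.2)
    (fun t => (t.1, t.2.1, -t.2.2))
    (by rintro ⟨x, y, z⟩ h; simp only [mem_filter, mem_sph, Good, neg_sq] at *; omega)
    (by rintro ⟨x, y, z⟩ h; simp)
    (by rintro ⟨x, y, z⟩ h; simp only [mem_filter, mem_sph, Good] at *; omega)]
  rw [half_card (((((sph k).filter Good).filter _).filter _).filter _) (fun t => t.1 < t.2.1)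
    (fun t => (t.2.1, t.1, t.2.2))
    (by rintro ⟨x, y, z⟩ h; simp only [mem_filter, mem_sph, Good] at *; omega)
    (by rintro ⟨x, y, z⟩ h; simp)
    (by rintro ⟨x, y, z⟩ h; simp only [mem_filter, mem_sph, Good] at *; omega)]
  set G := ((((sph k).filter Good).filter (fun t => 0 < t.1)).filter
    (fun t => 0 < t.2.1)).filter (fun t => 0 < t.2.2) |>.filter (fun t => t.1 < t.2.1) with hG
  set T := (sph k).filter (fun t => 0 < t.1 ∧ t.1 < t.2.1 ∧ t.2.1 < t.2.2) with hT
  have e1 := Finset.card_filter_add_card_filter_not (s := G) (fun t => t.2.1 < t.2.2)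
  have e2 := Finset.card_filter_add_card_filter_not
    (s := G.filter (fun t => ¬ t.2.1 < t.2.2)) (fun t => t.1 < t.2.2)
  have f1 : #(G.filter (fun t => t.2.1 < t.2.2)) = #T := by
    congr 1
    ext ⟨x, y, z⟩
    simp only [hG, hT, mem_filter, mem_sph, Good]
    omega
  have f2 : #((G.filter (fun t => ¬ t.2.1 < t.2.2)).filter (fun t => t.1 < t.2.2)) = #T := by
    refine Finset.card_nbij' (fun t => (t.1, t.2.2, t.2.1)) (fun t => (t.1, t.2.2, t.2.1))
      ?_ ?_ ?_ ?_
    · rintro ⟨x, y, z⟩ h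
      simp only [hG, hT, mem_coe, mem_filter, mem_sph, Good] at *
      omega
    · rintro ⟨x, y, z⟩ h
      simp only [hG, hT, mem_coe, mem_filter, mem_sph, Good] at *
      omega
    · rintro ⟨x, y, z⟩ h; rfl
    · rintro ⟨x, y, z⟩ h; rfl
  have f3 : #((G.filter (fun t => ¬ t.2.1 < t.2.2)).filter (fun t => ¬ t.1 < t.2.2)) = #T := by
    refine Finset.card_nbij' (fun t => (t.2.2, t.1, t.2.1)) (fun t => (t.2.1, t.2.2, t.1))
      ?_ ?_ ?_ ?_
    · rintro ⟨x, y, z⟩ h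
      simp only [hG, hT, mem_coe, mem_filter, mem_sph, Good] at *
      omega
    · rintro ⟨x, y, z⟩ h
      simp only [hG, hT, mem_coe, mem_filter, mem_sph, Good] at *
      omega
    · rintro ⟨x, y, z⟩ h; rfl
    · rintro ⟨x, y, z⟩ h; rfl
  omega

/-- Points on a coordinate axis. -/
def Axis (t : ℤ × ℤ × ℤ) : Prop :=
  (t.1 = 0 ∧ t.2.1 = 0) ∨ (t.1 = 0 ∧ t.2.2 = 0) ∨ (t.2.1 = 0 ∧ t.2.2 = 0)

instance : DecidablePred Axis := fun t => by unfold Axis; infer_instance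

open Finset in
theorem axis_card (m : ℕ) (hm : 0 < m) : #((sph (m ^ 2)).filter Axis) = 6 := by
  have h : (sph (m ^ 2)).filter Axis = {((m : ℤ), (0 : ℤ), (0 : ℤ)), (-(m : ℤ), 0, 0),
      (0, (m : ℤ), 0), (0, -(m : ℤ), 0), (0, 0, (m : ℤ)), (0, 0, -(m : ℤ))} := by
    ext ⟨x, y, z⟩
    simp only [mem_filter, mem_sph, Axis, mem_insert, mem_singleton, Prod.mk.injEq]
    push_cast
    constructor
    · rintro ⟨h, ⟨rfl, rfl⟩ | ⟨rfl, rfl⟩ | ⟨rfl, rfl⟩⟩ <;>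
      · simp only [ne_eq, OfNat.ofNat_ne_zero, not_false_eq_true, zero_pow, zero_add,
          add_zero] at h
        rcases sq_eq_sq_iff_eq_or_eq_neg.1 h with h | h <;> simp [h]
    · rintro (⟨rfl, rfl, rfl⟩ | ⟨rfl, rfl, rfl⟩ | ⟨rfl, rfl, rfl⟩ | ⟨rfl, rfl, rfl⟩ |
        ⟨rfl, rfl, rfl⟩ | ⟨rfl, rfl, rfl⟩) <;> simp
  rw [h]
  have h1 : (m : ℤ) ≠ 0 := by omega
  have h2 : (m : ℤ) ≠ -(m : ℤ) := by omega
  have h3 : -(m : ℤ) ≠ (m : ℤ) := by omega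
  repeat rw [card_insert_of_notMem (by simp [h2, h1.symm, hm.ne'])]
  simp

theorem no_two (m : ℕ) (hm : 0 < m) (x : ℤ) : 2 * x ^ 2 ≠ (m : ℤ) ^ 2 := by
  intro h
  have h2 : Irrational (√((2 : ℕ) : ℝ)) := Nat.prime_two.irrational_sqrt
  apply (irrational_sqrt_natCast_iff.1 h2)
  have hx : x ≠ 0 := by
    rintro rfl
    have : (m : ℤ) ^ 2 > 0 := by positivity
    simp at h; omega
  have hd : x ∣ (m : ℤ) := (Int.pow_dvd_pow_iff two_ne_zero).1 ⟨2, by linarith⟩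
  obtain ⟨c, hc⟩ := hd
  rw [hc, mul_pow] at h
  have : (2 : ℤ) = c ^ 2 := by
    have := pow_ne_zero 2 hx
    apply mul_left_cancel₀ this; linarith
  refine ⟨c.natAbs, ?_⟩
  zify
  rw [← sq, sq_abs]; exact_mod_cast this

theorem no_three (m : ℕ) (hm : 0 < m) (x : ℤ) : 3 * x ^ 2 ≠ (m : ℤ) ^ 2 := by
  intro h
  have h2 : Irrational (√((3 : ℕ) : ℝ)) := Nat.prime_three.irrational_sqrt
  apply (irrational_sqrt_natCast_iff.1 h2)
  have hx : x ≠ 0 := by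
    rintro rfl
    have : (m : ℤ) ^ 2 > 0 := by positivity
    simp at h; omega
  have hd : x ∣ (m : ℤ) := (Int.pow_dvd_pow_iff two_ne_zero).1 ⟨3, by linarith⟩
  obtain ⟨c, hc⟩ := hd
  rw [hc, mul_pow] at h
  have : (3 : ℤ) = c ^ 2 := by
    have := pow_ne_zero 2 hx
    apply mul_left_cancel₀ this; linarith
  refine ⟨c.natAbs, ?_⟩
  zify
  rw [← sq, sq_abs]; exact_mod_cast this

open Finset in
theorem pointwise_s6 (m : ℕ) (hm : 0 < m) (t : ℤ × ℤ × ℤ) (ht : t ∈ sph (m ^ 2)) :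
    (if Good t then 1 else 0) + (if t.1 = 0 then 1 else 0) + (if t.2.1 = 0 then 1 else 0)
    + (if t.2.2 = 0 then 1 else 0) + (if t.1 = t.2.1 then 1 else 0)
    + (if t.1 = -t.2.1 then 1 else 0) + (if t.1 = t.2.2 then 1 else 0)
    + (if t.1 = -t.2.2 then 1 else 0) + (if t.2.1 = t.2.2 then 1 else 0)
    + (if t.2.1 = -t.2.2 then 1 else 0) = 1 + 3 * (if Axis t then 1 else 0) := by
  obtain ⟨x, y, z⟩ := t
  rw [mem_sph] at ht
  push_cast at ht
  have n0 : ¬ (x = 0 ∧ y = 0 ∧ z = 0) := by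
    rintro ⟨rfl, rfl, rfl⟩
    exact no_two m hm 0 (by linarith)
  have a1 : ¬ (x = 0 ∧ (y = z ∨ y = -z)) := by
    rintro ⟨rfl, rfl | rfl⟩ <;> first
      | exact no_two m hm z (by linarith)
      | exact no_two m hm x (by linarith)
      | exact no_two m hm y (by linarith)
  have a2 : ¬ (y = 0 ∧ (x = z ∨ x = -z)) := by
    rintro ⟨rfl, rfl | rfl⟩ <;> first
      | exact no_two m hm z (by linarith)
      | exact no_two m hm x (by linarith)
      | exact no_two m hm y (by linarith)
  have a3 : ¬ (z = 0 ∧ (x = y ∨ x = -y)) := by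
    rintro ⟨rfl, rfl | rfl⟩ <;> first
      | exact no_two m hm z (by linarith)
      | exact no_two m hm x (by linarith)
      | exact no_two m hm y (by linarith)
  have a4 : ¬ ((x = z ∨ x = -z) ∧ (y = z ∨ y = -z)) := by
    rintro ⟨rfl | rfl, rfl | rfl⟩ <;> first
      | exact no_three m hm z (by linarith)
      | exact no_three m hm x (by linarith)
      | exact no_three m hm y (by linarith)
  clear ht
  simp only [Good, Axis]
  by_cases hx : x = 0
  · subst hx
    by_cases hy : y = 0
    · subst hy
      have : z ≠ 0 := by omega
      simp [this, this.symm]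
    · by_cases hz : z = 0
      · subst hz
        simp [hy, Ne.symm hy]
      · have h1 : ¬ y = z := by omega
        have h2 : ¬ y = -z := by omega
        simp [hy, hz, h1, h2, Ne.symm hy, Ne.symm hz]
  · have hA : ¬ (x = 0 ∧ y = 0 ∨ x = 0 ∧ z = 0) := by omega
    grind

open Finset in
theorem fortyeight_L3_square (k : ℕ) (hk : 0 < k)
    (h : ∃ m : ℕ, 0 < m ∧ k = m ^ 2) :
    48 * L3 k + 3 * N2 k + 6 * N2' k = N3 k + 18 := by
  obtain ⟨m, hm, rfl⟩ := h
  have key := Finset.sum_congr (s₁ := sph (m ^ 2)) rfl (pointwise_s6 m hm)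
  simp only [sum_add_distrib, ← mul_sum, sum_const, smul_eq_mul, mul_one, ← card_filter] at key
  rw [good_card, axis_card m hm, ← N3_eq] at key
  have z1 : #((sph (m ^ 2)).filter (fun t => t.1 = 0)) = N2 (m ^ 2) :=
    pair_count _ _ _ (fun p => (0, p.1, p.2)) (fun t => (t.2.1, t.2.2)) (fun _ => rfl)
      (by rintro ⟨x, y⟩ h; simp only [mem_sph, Set.mem_ofPred_eq] at *; exact ⟨by linarith, trivial⟩)
      (by rintro ⟨x, y, z⟩ h e; dsimp only at e; subst e; simp only [mem_sph, Set.mem_ofPred_eq] at *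
          exact ⟨by linarith, trivial⟩)
  have z2 : #((sph (m ^ 2)).filter (fun t => t.2.1 = 0)) = N2 (m ^ 2) :=
    pair_count _ _ _ (fun p => (p.1, 0, p.2)) (fun t => (t.1, t.2.2)) (fun _ => rfl)
      (by rintro ⟨x, y⟩ h; simp only [mem_sph, Set.mem_ofPred_eq] at *; exact ⟨by linarith, trivial⟩)
      (by rintro ⟨x, y, z⟩ h e; dsimp only at e; subst e; simp only [mem_sph, Set.mem_ofPred_eq] at *
          exact ⟨by linarith, trivial⟩)
  have z3 : #((sph (m ^ 2)).filter (fun t => t.2.2 = 0)) = N2 (m ^ 2) :=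
    pair_count _ _ _ (fun p => (p.1, p.2, 0)) (fun t => (t.1, t.2.1)) (fun _ => rfl)
      (by rintro ⟨x, y⟩ h; simp only [mem_sph, Set.mem_ofPred_eq] at *; exact ⟨by linarith, trivial⟩)
      (by rintro ⟨x, y, z⟩ h e; dsimp only at e; subst e; simp only [mem_sph, Set.mem_ofPred_eq] at *
          exact ⟨by linarith, trivial⟩)
  have e1 : #((sph (m ^ 2)).filter (fun t => t.1 = t.2.1)) = N2' (m ^ 2) :=
    pair_count _ _ _ (fun p => (p.2, p.2, p.1)) (fun t => (t.2.2, t.2.1)) (fun _ => rfl)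
      (by rintro ⟨x, y⟩ h; simp only [mem_sph, Set.mem_ofPred_eq] at *; exact ⟨by linarith, trivial⟩)
      (by rintro ⟨x, y, z⟩ h e; dsimp only at e; subst e; simp only [mem_sph, Set.mem_ofPred_eq] at *
          exact ⟨by linarith, trivial⟩)
  have e2 : #((sph (m ^ 2)).filter (fun t => t.1 = -t.2.1)) = N2' (m ^ 2) :=
    pair_count _ _ _ (fun p => (-p.2, p.2, p.1)) (fun t => (t.2.2, t.2.1)) (fun _ => rfl)
      (by rintro ⟨x, y⟩ h; simp only [mem_sph, Set.mem_ofPred_eq] at *; exact ⟨by linarith, trivial⟩)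
      (by rintro ⟨x, y, z⟩ h e; dsimp only at e; subst e; simp only [mem_sph, Set.mem_ofPred_eq] at *
          exact ⟨by linarith, trivial⟩)
  have e3 : #((sph (m ^ 2)).filter (fun t => t.1 = t.2.2)) = N2' (m ^ 2) :=
    pair_count _ _ _ (fun p => (p.2, p.1, p.2)) (fun t => (t.2.1, t.2.2)) (fun _ => rfl)
      (by rintro ⟨x, y⟩ h; simp only [mem_sph, Set.mem_ofPred_eq] at *; exact ⟨by linarith, trivial⟩)
      (by rintro ⟨x, y, z⟩ h e; dsimp only at e; subst e; simp only [mem_sph, Set.mem_ofPred_eq] at *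
          exact ⟨by linarith, trivial⟩)
  have e4 : #((sph (m ^ 2)).filter (fun t => t.1 = -t.2.2)) = N2' (m ^ 2) :=
    pair_count _ _ _ (fun p => (-p.2, p.1, p.2)) (fun t => (t.2.1, t.2.2)) (fun _ => rfl)
      (by rintro ⟨x, y⟩ h; simp only [mem_sph, Set.mem_ofPred_eq] at *; exact ⟨by linarith, trivial⟩)
      (by rintro ⟨x, y, z⟩ h e; dsimp only at e; subst e; simp only [mem_sph, Set.mem_ofPred_eq] at *
          exact ⟨by linarith, trivial⟩)
  have e5 : #((sph (m ^ 2)).filter (fun t => t.2.1 = t.2.2)) = N2' (m ^ 2) :=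
    pair_count _ _ _ (fun p => (p.1, p.2, p.2)) (fun t => (t.1, t.2.2)) (fun _ => rfl)
      (by rintro ⟨x, y⟩ h; simp only [mem_sph, Set.mem_ofPred_eq] at *; exact ⟨by linarith, trivial⟩)
      (by rintro ⟨x, y, z⟩ h e; dsimp only at e; subst e; simp only [mem_sph, Set.mem_ofPred_eq] at *
          exact ⟨by linarith, trivial⟩)
  have e6 : #((sph (m ^ 2)).filter (fun t => t.2.1 = -t.2.2)) = N2' (m ^ 2) :=
    pair_count _ _ _ (fun p => (p.1, -p.2, p.2)) (fun t => (t.1, t.2.2)) (fun _ => rfl)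
      (by rintro ⟨x, y⟩ h; simp only [mem_sph, Set.mem_ofPred_eq] at *; exact ⟨by linarith, trivial⟩)
      (by rintro ⟨x, y, z⟩ h e; dsimp only at e; subst e; simp only [mem_sph, Set.mem_ofPred_eq] at *
          exact ⟨by linarith, trivial⟩)
  rw [z1, z2, z3, e1, e2, e3, e4, e5, e6] at key
  omega
end

section
/- Let k be a positive integer with k = 2m² for some positive integer m. Then 48·L₃(k) = N₃(k) − 3·N₂(k) − 6·N₂′(k) + 12. -/
/-- Splitting a finite set along a predicate. -/
lemma aux_split {α : Type*} (S : Set α) (hS : S.Finite) (p : α → Prop) :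
    S.ncard = {t | t ∈ S ∧ p t}.ncard + {t | t ∈ S ∧ ¬ p t}.ncard := by
  rw [← Set.ncard_union_eq ?_ (hS.subset (fun t h => h.1)) (hS.subset (fun t h => h.1))]
  · congr 1
    ext t
    simp only [Set.mem_union, Set.mem_ofPred_eq]
    tauto
  · rw [Set.disjoint_left]
    rintro t ⟨_, h⟩ ⟨_, hq⟩
    exact hq h

/-- Mutually inverse maps give equal cardinalities. -/
lemma aux_bij {α β : Type*} (S : Set α) (T : Set β) (f : α → β) (g : β → α)
    (hf : ∀ a ∈ S, f a ∈ T ∧ g (f a) = a) (hg : ∀ b ∈ T, g b ∈ S ∧ f (g b) = b) :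
    S.ncard = T.ncard := by
  have : T = f '' S := by
    ext b
    constructor
    · intro hb
      exact ⟨g b, (hg b hb).1, (hg b hb).2⟩
    · rintro ⟨a, ha, rfl⟩
      exact (hf a ha).1
  rw [this, Set.InjOn.ncard_image]
  intro a ha b hb hab
  rw [← (hf a ha).2, ← (hf b hb).2, hab]

lemma aux_half {α : Type*} (S : Set α) (hS : S.Finite) (p : α → Prop) (f : α → α)
    (hf : ∀ a, f (f a) = a) (hm : ∀ a ∈ S, f a ∈ S) (hp : ∀ a ∈ S, (p (f a) ↔ ¬ p a)) :
    S.ncard = 2 * {t | t ∈ S ∧ p t}.ncard := by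
  rw [aux_split S hS p, two_mul]
  congr 1
  apply aux_bij _ _ f f
  · rintro a ⟨h, hq⟩
    exact ⟨⟨hm a h, by rw [hp a h]; exact hq⟩, hf a⟩
  · rintro a ⟨h, hq⟩
    refine ⟨⟨hm a h, ?_⟩, hf a⟩
    rw [hp a h]; exact not_not_intro hq

/-- All integer solutions. -/
def SS (k : ℕ) : Set (ℤ × ℤ × ℤ) := {t | t.1 ^ 2 + t.2.1 ^ 2 + t.2.2 ^ 2 = (k : ℤ)}

lemma SS_finite (k : ℕ) : (SS k).Finite := by
  apply Set.Finite.subset (Set.finite_Icc ((-(k:ℤ), -(k:ℤ), -(k:ℤ))) ((k:ℤ), (k:ℤ), (k:ℤ)))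
  rintro ⟨x, y, z⟩ h
  simp only [SS, Set.mem_ofPred_eq] at h
  simp only [Set.mem_Icc, Prod.mk_le_mk]
  refine ⟨⟨?_, ?_, ?_⟩, ?_, ?_, ?_⟩ <;> nlinarith [sq_nonneg x, sq_nonneg y, sq_nonneg z,
    Int.le_self_sq x, Int.le_self_sq y, Int.le_self_sq z, Int.le_self_sq (-x),
    Int.le_self_sq (-y), Int.le_self_sq (-z)]

/-- Generic solutions: nonzero, with distinct absolute values. -/
def GG (k : ℕ) : Set (ℤ × ℤ × ℤ) := {t | t ∈ SS k ∧ t.1 ≠ 0 ∧ t.2.1 ≠ 0 ∧ t.2.2 ≠ 0 ∧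
  t.1 ^ 2 ≠ t.2.1 ^ 2 ∧ t.2.1 ^ 2 ≠ t.2.2 ^ 2 ∧ t.1 ^ 2 ≠ t.2.2 ^ 2}

/-- Solutions with a zero coordinate. -/
def ZZ (k : ℕ) : Set (ℤ × ℤ × ℤ) := {t | t ∈ SS k ∧ (t.1 = 0 ∨ t.2.1 = 0 ∨ t.2.2 = 0)}

/-- Solutions with two coordinates of equal absolute value. -/
def EE (k : ℕ) : Set (ℤ × ℤ × ℤ) := {t | t ∈ SS k ∧
  (t.1 ^ 2 = t.2.1 ^ 2 ∨ t.2.1 ^ 2 = t.2.2 ^ 2 ∨ t.1 ^ 2 = t.2.2 ^ 2)}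

lemma card_L (k : ℕ) (T : Set (ℤ × ℤ × ℤ))
    (hT : T = {t | t ∈ SS k ∧ 0 < t.1 ∧ t.1 < t.2.1 ∧ t.2.1 < t.2.2}) : T.ncard = L3 k := by
  subst hT
  unfold L3
  apply aux_bij _ _ (fun t : ℤ × ℤ × ℤ => (t.1.toNat, t.2.1.toNat, t.2.2.toNat))
    (fun t : ℕ × ℕ × ℕ => ((t.1 : ℤ), (t.2.1 : ℤ), (t.2.2 : ℤ)))
  · rintro ⟨x, y, z⟩ ⟨h, hx, hy, hz⟩
    simp only [SS, Set.mem_ofPred_eq] at *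
    lift x to ℕ using by omega
    lift y to ℕ using by omega
    lift z to ℕ using by omega
    norm_cast at *
  · rintro ⟨x, y, z⟩ ⟨hx, hy, hz, h⟩
    simp only [SS, Set.mem_ofPred_eq] at *
    norm_cast

lemma card_GG (k : ℕ) : (GG k).ncard = 48 * L3 k := by
  have hG : (GG k).Finite := (SS_finite k).subset (fun t h => h.1)
  rw [aux_half (GG k) hG (fun t => 0 < t.1) (fun t => (-t.1, t.2.1, t.2.2))
    (by simp) (by simp [GG, SS]) (by simp only [GG, Set.mem_ofPred_eq]; grind)]
  set G1 := {t | t ∈ GG k ∧ 0 < t.1} with h1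
  have hG1 : G1.Finite := hG.subset (fun t h => h.1)
  rw [aux_half G1 hG1 (fun t => 0 < t.2.1) (fun t => (t.1, -t.2.1, t.2.2))
    (by simp) (by simp only [h1, GG, SS, Set.mem_ofPred_eq]; grind) (by simp only [h1, GG, Set.mem_ofPred_eq]; grind)]
  set G2 := {t | t ∈ G1 ∧ 0 < t.2.1} with h2
  have hG2 : G2.Finite := hG1.subset (fun t h => h.1)
  rw [aux_half G2 hG2 (fun t => 0 < t.2.2) (fun t => (t.1, t.2.1, -t.2.2))
    (by simp) (by simp only [h2, h1, GG, SS, Set.mem_ofPred_eq]; grind)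
    (by simp only [h2, h1, GG, Set.mem_ofPred_eq]; grind)]
  set G3 := {t | t ∈ G2 ∧ 0 < t.2.2} with h3
  have hG3 : G3.Finite := hG2.subset (fun t h => h.1)
  have e3 : G3 = {t | t ∈ SS k ∧ 0 < t.1 ∧ 0 < t.2.1 ∧ 0 < t.2.2 ∧ t.1 ≠ t.2.1 ∧
      t.2.1 ≠ t.2.2 ∧ t.1 ≠ t.2.2} := by
    ext ⟨x, y, z⟩
    simp only [h3, h2, h1, GG, Set.mem_ofPred_eq]
    constructor
    · grind
    · rintro ⟨h, hx, hy, hz, hxy, hyz, hxz⟩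
      refine ⟨⟨⟨⟨h, hx.ne', hy.ne', hz.ne', ?_, ?_, ?_⟩, hx⟩, hy⟩, hz⟩ <;>
      · rw [Ne, sq_eq_sq₀ (by omega) (by omega)]; assumption
  clear_value G3
  rw [aux_half G3 hG3 (fun t => t.1 < t.2.1) (fun t => (t.2.1, t.1, t.2.2))
    (by simp) (by simp only [e3, SS, Set.mem_ofPred_eq]; grind)
    (by simp only [e3, Set.mem_ofPred_eq]; grind)]
  set G4 := {t | t ∈ G3 ∧ t.1 < t.2.1} with h4
  have hG4 : G4.Finite := hG3.subset (fun t h => h.1)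
  rw [aux_split G4 hG4 (fun t => t.2.1 < t.2.2)]
  set G5 := {t | t ∈ G4 ∧ ¬ t.2.1 < t.2.2} with h5
  have hG5 : G5.Finite := hG4.subset (fun t h => h.1)
  rw [aux_split G5 hG5 (fun t => t.1 < t.2.2)]
  have c1 : {t | t ∈ G4 ∧ t.2.1 < t.2.2}.ncard = L3 k := by
    apply card_L
    ext ⟨x, y, z⟩
    simp only [h4, e3, Set.mem_ofPred_eq]
    grind
  have c2 : {t | t ∈ G5 ∧ t.1 < t.2.2}.ncard = L3 k := by
    rw [← card_L k _ rfl]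
    apply aux_bij _ _ (fun t => (t.1, t.2.2, t.2.1)) (fun t => (t.1, t.2.2, t.2.1)) <;>
    · simp only [h5, h4, e3, SS, Set.mem_ofPred_eq]
      grind
  have c3 : {t | t ∈ G5 ∧ ¬ t.1 < t.2.2}.ncard = L3 k := by
    rw [← card_L k _ rfl]
    apply aux_bij _ _ (fun t => (t.2.2, t.1, t.2.1)) (fun t => (t.2.1, t.2.2, t.1)) <;>
    · simp only [h5, h4, e3, SS, Set.mem_ofPred_eq]
      grind
  rw [c1, c2, c3]
  ring

lemma two_sq_ne (m : ℕ) (hm : 0 < m) (x : ℤ) : x ^ 2 ≠ 2 * (m : ℤ) ^ 2 := by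
  intro h
  have hi : Irrational (√(2 : ℝ)) := irrational_sqrt_two
  apply hi
  refine ⟨|(x : ℚ)| / m, ?_⟩
  symm
  rw [Real.sqrt_eq_iff_eq_sq (by norm_num) (by positivity)]
  have hm' : (m : ℝ) ≠ 0 := by positivity
  push_cast
  rw [div_pow, sq_abs, eq_div_iff (by positivity)]
  exact_mod_cast h.symm

lemma three_sq_ne (m : ℕ) (hm : 0 < m) (x : ℤ) : 3 * x ^ 2 ≠ 2 * (m : ℤ) ^ 2 := by
  intro h
  have hi : Irrational (√(6 : ℕ) : ℝ) := by
    rw [irrational_sqrt_natCast_iff]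
    rintro ⟨r, hr⟩
    have : r < 3 := by nlinarith
    interval_cases r <;> omega
  apply hi
  refine ⟨3 * |(x : ℚ)| / m, ?_⟩
  symm
  rw [Real.sqrt_eq_iff_eq_sq (by norm_num) (by positivity)]
  have hm' : (m : ℝ) ≠ 0 := by positivity
  push_cast
  rw [div_pow, mul_pow, sq_abs, eq_div_iff (by positivity)]
  have : 3 * (x : ℝ) ^ 2 = 2 * (m : ℝ) ^ 2 := by exact_mod_cast h
  linarith

lemma card_ZZ (m : ℕ) (hm : 0 < m) : (ZZ (2 * m ^ 2)).ncard = 3 * N2 (2 * m ^ 2) := by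
  have key := two_sq_ne m hm
  have hZ : (ZZ (2 * m ^ 2)).Finite := (SS_finite _).subset (fun t h => h.1)
  rw [aux_split _ hZ (fun t => t.1 = 0)]
  set Z1 := {t | t ∈ ZZ (2 * m ^ 2) ∧ ¬ t.1 = 0} with h1
  have hZ1 : Z1.Finite := hZ.subset (fun t h => h.1)
  rw [aux_split _ hZ1 (fun t => t.2.1 = 0)]
  have c1 : {t | t ∈ ZZ (2 * m ^ 2) ∧ t.1 = 0}.ncard = N2 (2 * m ^ 2) := by
    unfold N2
    apply aux_bij _ _ (fun t => (t.2.1, t.2.2)) (fun p => (0, p.1, p.2)) <;>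
    · simp only [ZZ, SS, Set.mem_ofPred_eq]
      push_cast
      grind
  have c2 : {t | t ∈ Z1 ∧ t.2.1 = 0}.ncard = N2 (2 * m ^ 2) := by
    unfold N2
    apply aux_bij _ _ (fun t => (t.1, t.2.2)) (fun p => (p.1, 0, p.2)) <;>
    · simp only [h1, ZZ, SS, Set.mem_ofPred_eq]
      push_cast
      grind
  have c3 : {t | t ∈ Z1 ∧ ¬ t.2.1 = 0}.ncard = N2 (2 * m ^ 2) := by
    unfold N2
    apply aux_bij _ _ (fun t => (t.1, t.2.1)) (fun p => (p.1, p.2, 0)) <;>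
    · simp only [h1, ZZ, SS, Set.mem_ofPred_eq]
      push_cast
      grind
  rw [c1, c2, c3]
  ring

lemma card_EE (m : ℕ) (hm : 0 < m) : (EE (2 * m ^ 2)).ncard = 6 * N2' (2 * m ^ 2) := by
  have key := two_sq_ne m hm
  have key3 := three_sq_ne m hm
  have hE : (EE (2 * m ^ 2)).Finite := (SS_finite _).subset (fun t h => h.1)
  rw [aux_split _ hE (fun t => t.1 = t.2.1)]
  set E1 := {t | t ∈ EE (2 * m ^ 2) ∧ ¬ t.1 = t.2.1} with h1
  have hE1 : E1.Finite := hE.subset (fun t h => h.1)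
  rw [aux_split _ hE1 (fun t => t.1 = - t.2.1)]
  set E2 := {t | t ∈ E1 ∧ ¬ t.1 = - t.2.1} with h2
  have hE2 : E2.Finite := hE1.subset (fun t h => h.1)
  rw [aux_split _ hE2 (fun t => t.2.1 = t.2.2)]
  set E3 := {t | t ∈ E2 ∧ ¬ t.2.1 = t.2.2} with h3
  have hE3 : E3.Finite := hE2.subset (fun t h => h.1)
  rw [aux_split _ hE3 (fun t => t.2.1 = - t.2.2)]
  set E4 := {t | t ∈ E3 ∧ ¬ t.2.1 = - t.2.2} with h4
  have hE4 : E4.Finite := hE3.subset (fun t h => h.1)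
  rw [aux_split _ hE4 (fun t => t.1 = t.2.2)]
  have c1 : {t | t ∈ EE (2 * m ^ 2) ∧ t.1 = t.2.1}.ncard = N2' (2 * m ^ 2) := by
    unfold N2'
    apply aux_bij _ _ (fun t => (t.2.2, t.2.1)) (fun p => (p.2, p.2, p.1)) <;>
    · simp only [EE, SS, Set.mem_ofPred_eq]
      push_cast
      grind
  have c2 : {t | t ∈ E1 ∧ t.1 = -t.2.1}.ncard = N2' (2 * m ^ 2) := by
    unfold N2'
    apply aux_bij _ _ (fun t => (t.2.2, t.2.1)) (fun p => (-p.2, p.2, p.1)) <;>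
    · simp only [h1, EE, SS, Set.mem_ofPred_eq]
      push_cast
      grind
  have c3 : {t | t ∈ E2 ∧ t.2.1 = t.2.2}.ncard = N2' (2 * m ^ 2) := by
    unfold N2'
    apply aux_bij _ _ (fun t => (t.1, t.2.1)) (fun p => (p.1, p.2, p.2)) <;>
    · simp only [h2, h1, EE, SS, Set.mem_ofPred_eq]
      push_cast
      grind
  have c4 : {t | t ∈ E3 ∧ t.2.1 = -t.2.2}.ncard = N2' (2 * m ^ 2) := by
    unfold N2'
    apply aux_bij _ _ (fun t => (t.1, t.2.1)) (fun p => (p.1, p.2, -p.2)) <;>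
    · simp only [h3, h2, h1, EE, SS, Set.mem_ofPred_eq]
      push_cast
      grind
  have c5 : {t | t ∈ E4 ∧ t.1 = t.2.2}.ncard = N2' (2 * m ^ 2) := by
    unfold N2'
    apply aux_bij _ _ (fun t => (t.2.1, t.1)) (fun p => (p.2, p.1, p.2)) <;>
    · simp only [h4, h3, h2, h1, EE, SS, Set.mem_ofPred_eq]
      push_cast
      grind
  have c6 : {t | t ∈ E4 ∧ ¬ t.1 = t.2.2}.ncard = N2' (2 * m ^ 2) := by
    unfold N2'
    apply aux_bij _ _ (fun t => (t.2.1, t.1)) (fun p => (p.2, p.1, -p.2)) <;>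
    · simp only [h4, h3, h2, h1, EE, SS, Set.mem_ofPred_eq]
      push_cast
      clear c1 c2 c3 c4 c5 hE hE1 hE2 hE3 hE4
      clear_value E4 E3 E2 E1
      clear h4 h3 h2 h1
      simp only [sq_eq_sq_iff_eq_or_eq_neg]
      grind
  rw [c1, c2, c3, c4, c5, c6]
  ring

lemma card_ZE (m : ℕ) (hm : 0 < m) : (ZZ (2 * m ^ 2) ∩ EE (2 * m ^ 2)).ncard = 12 := by
  have key := two_sq_ne m hm
  obtain ⟨M, hM⟩ : ∃ M : ℤ, M = m := ⟨_, rfl⟩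
  have hM0 : M ≠ 0 := by omega
  have hMM : M ≠ -M := by omega
  have e : ZZ (2 * m ^ 2) ∩ EE (2 * m ^ 2) = (({(0, M, M), (0, M, -M), (0, -M, M), (0, -M, -M),
      (M, 0, M), (M, 0, -M), (-M, 0, M), (-M, 0, -M),
      (M, M, 0), (M, -M, 0), (-M, M, 0), (-M, -M, 0)} : Finset (ℤ × ℤ × ℤ)) :
        Set (ℤ × ℤ × ℤ)) := by
    ext ⟨x, y, z⟩
    simp only [ZZ, EE, SS, Set.mem_inter_iff, Set.mem_ofPred_eq, Finset.coe_insert,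
      Finset.coe_singleton, Set.mem_insert_iff, Set.mem_singleton_iff, Prod.mk.injEq]
    push_cast
    rw [← hM] at key ⊢
    constructor
    · rintro ⟨⟨h, h0⟩, -, h1⟩
      have kx := key x
      have ky := key y
      have kz := key z
      have hx : x ^ 2 = M ^ 2 → x = M ∨ x = -M := sq_eq_sq_iff_eq_or_eq_neg.1
      have hy : y ^ 2 = M ^ 2 → y = M ∨ y = -M := sq_eq_sq_iff_eq_or_eq_neg.1
      have hz : z ^ 2 = M ^ 2 → z = M ∨ z = -M := sq_eq_sq_iff_eq_or_eq_neg.1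
      rcases h0 with rfl | rfl | rfl
      · have : y ^ 2 = M ^ 2 ∧ z ^ 2 = M ^ 2 := by
          rcases h1 with h1 | h1 | h1 <;> constructor <;> first | linarith | (exfalso; apply kz; linarith) | (exfalso; apply ky; linarith)
        rcases hy this.1 with r | r <;> rcases hz this.2 with rr | rr <;> simp [r, rr]
      · have : x ^ 2 = M ^ 2 ∧ z ^ 2 = M ^ 2 := by
          rcases h1 with h1 | h1 | h1 <;> constructor <;> first | linarith | (exfalso; apply kz; linarith) | (exfalso; apply kx; linarith)
        rcases hx this.1 with r | r <;> rcases hz this.2 with rr | rr <;> simp [r, rr]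
      · have : x ^ 2 = M ^ 2 ∧ y ^ 2 = M ^ 2 := by
          rcases h1 with h1 | h1 | h1 <;> constructor <;> first | linarith | (exfalso; apply kx; linarith) | (exfalso; apply ky; linarith)
        rcases hx this.1 with r | r <;> rcases hy this.2 with rr | rr <;> simp [r, rr]
    · rintro (⟨rfl, rfl, rfl⟩ | ⟨rfl, rfl, rfl⟩ | ⟨rfl, rfl, rfl⟩ | ⟨rfl, rfl, rfl⟩ |
        ⟨rfl, rfl, rfl⟩ | ⟨rfl, rfl, rfl⟩ | ⟨rfl, rfl, rfl⟩ | ⟨rfl, rfl, rfl⟩ |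
        ⟨rfl, rfl, rfl⟩ | ⟨rfl, rfl, rfl⟩ | ⟨rfl, rfl, rfl⟩ | ⟨rfl, rfl, rfl⟩) <;>
      refine ⟨⟨by ring, by simp⟩, by ring, by simp⟩
  rw [e, Set.ncard_coe_finset]
  have hMM' : -M ≠ M := hMM.symm
  have hM0' : 0 ≠ M := hM0.symm
  simp [hM0, hMM, hMM', hM0', Finset.card_insert_of_notMem]

theorem fortyeight_L3_twice_square (k : ℕ) (hk : 0 < k)
    (h : ∃ m : ℕ, 0 < m ∧ k = 2 * m ^ 2) :
    48 * L3 k + 3 * N2 k + 6 * N2' k = N3 k + 12 := by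
  obtain ⟨m, hm, rfl⟩ := h
  rw [← card_GG, ← card_ZZ m hm, ← card_EE m hm, ← card_ZE m hm]
  have hS := SS_finite (2 * m ^ 2)
  have hZ : (ZZ (2 * m ^ 2)).Finite := hS.subset (fun t h => h.1)
  have hE : (EE (2 * m ^ 2)).Finite := hS.subset (fun t h => h.1)
  have h1 := Set.ncard_union_add_ncard_inter (ZZ (2 * m ^ 2)) (EE (2 * m ^ 2)) hZ hE
  have h2 := aux_split _ hS (fun t => t ∈ ZZ (2 * m ^ 2) ∪ EE (2 * m ^ 2))
  have h3 : N3 (2 * m ^ 2) = (SS (2 * m ^ 2)).ncard := rfl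
  have h4 : {t | t ∈ SS (2 * m ^ 2) ∧ t ∈ ZZ (2 * m ^ 2) ∪ EE (2 * m ^ 2)}
      = ZZ (2 * m ^ 2) ∪ EE (2 * m ^ 2) := by
    ext t
    simp only [ZZ, EE, Set.mem_union, Set.mem_ofPred_eq]
    tauto
  have h5 : {t | t ∈ SS (2 * m ^ 2) ∧ ¬ t ∈ ZZ (2 * m ^ 2) ∪ EE (2 * m ^ 2)}
      = GG (2 * m ^ 2) := by
    ext t
    simp only [ZZ, EE, GG, Set.mem_union, Set.mem_ofPred_eq]
    tauto
  rw [h4, h5] at h2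
  omega
end

section
/- Let k be a positive integer. If there exists a triple (ν₁, ν₂, ν₃) of positive integers with ν₁ + ν₃ odd satisfying (ν₁ + 2ν₂ + ν₃)² + 2ν₁² + 2ν₃² = k, then k ≡ 3 (mod 8), and the number of triples (ν₁, ν₂, ν₃) of positive integers with ν₁ + ν₃ odd satisfying this equation equals 2·L₃(k). -/
theorem sq_mod_eight_cases (x : ℕ) :
    (x % 2 = 1 ∧ x ^ 2 % 8 = 1) ∨ (x % 2 = 0 ∧ (x ^ 2 % 8 = 0 ∨ x ^ 2 % 8 = 4)) := by
  have h : x % 8 < 8 := Nat.mod_lt _ (by norm_num)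
  have h2 : x ^ 2 % 8 = (x % 8) ^ 2 % 8 := Nat.pow_mod x 2 8
  have h3 : x % 2 = (x % 8) % 2 := by omega
  rw [h2, h3]
  generalize x % 8 = r at h
  interval_cases r <;> simp

theorem all_odd_of_sum (x y z k : ℕ) (hk : k % 8 = 3) (h : x ^ 2 + y ^ 2 + z ^ 2 = k) :
    x % 2 = 1 ∧ y % 2 = 1 ∧ z % 2 = 1 := by
  have hx := sq_mod_eight_cases x
  have hy := sq_mod_eight_cases y
  have hz := sq_mod_eight_cases z
  omega

theorem solution_mod_eight (a b c k : ℕ) (ho : Odd (a + c))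
    (h : (a + 2 * b + c) ^ 2 + 2 * a ^ 2 + 2 * c ^ 2 = k) : k % 8 = 3 := by
  have h1 := sq_mod_eight_cases (a + 2 * b + c)
  have h2 := sq_mod_eight_cases a
  have h3 := sq_mod_eight_cases c
  rw [Nat.odd_iff] at ho
  omega

/-- The solution with smaller first coordinate attached to `x < y < z`. -/
def solF (t : ℕ × ℕ × ℕ) : ℕ × ℕ × ℕ :=
  ((t.2.1 - t.1) / 2, (t.2.2 - t.2.1) / 2, (t.2.1 + t.1) / 2)

/-- The solution with larger first coordinate attached to `x < y < z`. -/
def solG (t : ℕ × ℕ × ℕ) : ℕ × ℕ × ℕ :=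
  ((t.2.1 + t.1) / 2, (t.2.2 - t.2.1) / 2, (t.2.1 - t.1) / 2)

theorem param_of_odd (x y z : ℕ) (h1 : x < y) (h2 : y < z)
    (hx : x % 2 = 1) (hy : y % 2 = 1) (hz : z % 2 = 1) :
    ∃ a b d, 0 < a ∧ 0 < b ∧ x = d ∧ y = 2 * a + d ∧ z = 2 * a + d + 2 * b ∧
      (y - x) / 2 = a ∧ (z - y) / 2 = b ∧ (y + x) / 2 = a + d :=
  ⟨(y - x) / 2, (z - y) / 2, x, by omega, by omega, rfl, by omega, by omega, rfl, rfl, by omega⟩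

theorem su4_odd_case (k : ℕ) (hk : 0 < k)
    (h : ∃ v : ℕ × ℕ × ℕ, 0 < v.1 ∧ 0 < v.2.1 ∧ 0 < v.2.2 ∧ Odd (v.1 + v.2.2) ∧
      (v.1 + 2 * v.2.1 + v.2.2) ^ 2 + 2 * v.1 ^ 2 + 2 * v.2.2 ^ 2 = k) :
    k % 8 = 3 ∧
    {v : ℕ × ℕ × ℕ | 0 < v.1 ∧ 0 < v.2.1 ∧ 0 < v.2.2 ∧ Odd (v.1 + v.2.2) ∧
      (v.1 + 2 * v.2.1 + v.2.2) ^ 2 + 2 * v.1 ^ 2 + 2 * v.2.2 ^ 2 = k}.ncard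
      = 2 * L3 k := by
  have hk3 : k % 8 = 3 := by
    obtain ⟨⟨a, b, c⟩, -, -, -, ho, he⟩ := h
    exact solution_mod_eight a b c k ho he
  refine ⟨hk3, ?_⟩
  unfold L3
  set T : Set (ℕ × ℕ × ℕ) := {t : ℕ × ℕ × ℕ | 0 < t.1 ∧ t.1 < t.2.1 ∧ t.2.1 < t.2.2 ∧
    t.1 ^ 2 + t.2.1 ^ 2 + t.2.2 ^ 2 = k} with hT
  have hodd : ∀ t ∈ T, t.1 % 2 = 1 ∧ t.2.1 % 2 = 1 ∧ t.2.2 % 2 = 1 := by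
    rintro ⟨x, y, z⟩ ⟨-, -, -, he⟩
    exact all_odd_of_sum x y z k hk3 he
  have hTfin : T.Finite := by
    apply Set.Finite.subset ((Set.finite_Iic k).prod ((Set.finite_Iic k).prod (Set.finite_Iic k)))
    rintro ⟨x, y, z⟩ ⟨-, -, -, he⟩
    simp only [] at he
    have h1 := Nat.le_self_pow (two_ne_zero) x
    have h2 := Nat.le_self_pow (two_ne_zero) y
    have h3 := Nat.le_self_pow (two_ne_zero) z
    simp only [Set.mem_prod, Set.mem_Iic]
    omega
  have hF : Set.InjOn solF T := by
    rintro ⟨x, y, z⟩ h1 ⟨x', y', z'⟩ h2 h12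
    have o1 := hodd _ h1
    have o2 := hodd _ h2
    obtain ⟨p1, p2, p3, -⟩ := h1
    obtain ⟨q1, q2, q3, -⟩ := h2
    simp only [solF, Prod.mk.injEq] at *
    omega
  have hG : Set.InjOn solG T := by
    rintro ⟨x, y, z⟩ h1 ⟨x', y', z'⟩ h2 h12
    have o1 := hodd _ h1
    have o2 := hodd _ h2
    obtain ⟨p1, p2, p3, -⟩ := h1
    obtain ⟨q1, q2, q3, -⟩ := h2
    simp only [solG, Prod.mk.injEq] at *
    omega
  have hdis : Disjoint (solF '' T) (solG '' T) := by
    rw [Set.disjoint_left]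
    rintro _ ⟨⟨x, y, z⟩, h1, rfl⟩ ⟨⟨x', y', z'⟩, h2, h12⟩
    have o1 := hodd _ h1
    have o2 := hodd _ h2
    obtain ⟨p1, p2, p3, -⟩ := h1
    obtain ⟨q1, q2, q3, -⟩ := h2
    simp only [solF, solG, Prod.mk.injEq] at *
    omega
  have hS : {v : ℕ × ℕ × ℕ | 0 < v.1 ∧ 0 < v.2.1 ∧ 0 < v.2.2 ∧ Odd (v.1 + v.2.2) ∧
      (v.1 + 2 * v.2.1 + v.2.2) ^ 2 + 2 * v.1 ^ 2 + 2 * v.2.2 ^ 2 = k}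
      = solF '' T ∪ solG '' T := by
    ext ⟨a, b, c⟩
    constructor
    · rintro ⟨ha, hb, hc, ho, he⟩
      simp only [] at ha hb hc ho he
      rw [Nat.odd_iff] at ho
      rcases lt_or_ge a c with hac | hac
      · left
        obtain ⟨d, rfl⟩ := Nat.exists_eq_add_of_lt hac
        refine ⟨(d + 1, 2 * a + d + 1, 2 * a + d + 1 + 2 * b), ⟨?_, ?_, ?_, ?_⟩, ?_⟩
        · simp
        · simp only []; omega
        · simp only []; omega
        · rw [← he]; ring
        · simp only [solF, Prod.mk.injEq]; omega
      · right
        have hac : c < a := by omega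
        obtain ⟨d, rfl⟩ := Nat.exists_eq_add_of_lt hac
        refine ⟨(d + 1, 2 * c + d + 1, 2 * c + d + 1 + 2 * b), ⟨?_, ?_, ?_, ?_⟩, ?_⟩
        · simp
        · simp only []; omega
        · simp only []; omega
        · rw [← he]; ring
        · simp only [solG, Prod.mk.injEq]; omega
    · rintro (⟨⟨x, y, z⟩, ht, h12⟩ | ⟨⟨x, y, z⟩, ht, h12⟩)
      all_goals
        obtain ⟨o1, o2, o3⟩ := hodd _ ht
        obtain ⟨p1, p2, p3, p4⟩ := ht
        simp only [] at o1 o2 o3 p1 p2 p3 p4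
        obtain ⟨a', b', d, ha, hb, hx, hy, hz, e1, e2, e3⟩ := param_of_odd x y z p2 p3 o1 o2 o3
        simp only [solF, solG, Prod.mk.injEq, e1, e2, e3] at h12
        obtain ⟨rfl, rfl, rfl⟩ := h12
        refine ⟨by simp only []; omega, by simp only []; omega, by simp only []; omega,
          by simp only [Nat.odd_iff]; omega, ?_⟩
        rw [← p4, hx, hy, hz]
        ring
  rw [hS, Set.ncard_union_eq hdis (hTfin.image _) (hTfin.image _), hF.ncard_image,
    hG.ncard_image]
  ring
end

section
/- Let m be a positive integer. The number of ordered triples (ν₁, ν₂, ν₃) of positive integers with ν₁ ≠ ν₃, ν₁ ≡ ν₃ (mod 2), and (ν₁ + 2ν₂ + ν₃)² + 2ν₁² + 2ν₃² = 4m equals 2·L₃(m). -/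
/-- The solution of the SU(4) equation with `ν₁ < ν₃` attached to `(x, y, z)`. -/
def su4F (t : ℕ × ℕ × ℕ) : ℕ × ℕ × ℕ := (t.2.1 - t.1, t.2.2 - t.2.1, t.2.1 + t.1)

/-- The solution of the SU(4) equation with `ν₁ > ν₃` attached to `(x, y, z)`. -/
def su4G (t : ℕ × ℕ × ℕ) : ℕ × ℕ × ℕ := (t.2.1 + t.1, t.2.2 - t.2.1, t.2.1 - t.1)

/-- The set counted by `L3`. -/
def su4S (k : ℕ) : Set (ℕ × ℕ × ℕ) := {t : ℕ × ℕ × ℕ | 0 < t.1 ∧ t.1 < t.2.1 ∧ t.2.1 < t.2.2 ∧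
    t.1 ^ 2 + t.2.1 ^ 2 + t.2.2 ^ 2 = k}

lemma su4S_finite (k : ℕ) : (su4S k).Finite := by
  apply Set.Finite.subset (Set.finite_Iic ((k, k, k) : ℕ × ℕ × ℕ))
  rintro ⟨x, y, z⟩ ⟨h1, h2, h3, h4⟩
  simp only at h1 h2 h3 h4
  simp only [Set.mem_Iic, Prod.mk_le_mk]
  refine ⟨?_, ?_, ?_⟩ <;> nlinarith

lemma su4F_inj (k : ℕ) : Set.InjOn su4F (su4S k) := by
  rintro ⟨x, y, z⟩ ⟨h1, h2, h3, h4⟩ ⟨u, v, w⟩ ⟨g1, g2, g3, g4⟩ h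
  simp only [su4F, Prod.mk.injEq] at *
  omega

lemma su4G_inj (k : ℕ) : Set.InjOn su4G (su4S k) := by
  rintro ⟨x, y, z⟩ ⟨h1, h2, h3, h4⟩ ⟨u, v, w⟩ ⟨g1, g2, g3, g4⟩ h
  simp only [su4G, Prod.mk.injEq] at *
  omega

theorem su4_even_distinct_case (m : ℕ) (hm : 0 < m) :
    {v : ℕ × ℕ × ℕ | 0 < v.1 ∧ 0 < v.2.1 ∧ 0 < v.2.2 ∧ v.1 ≠ v.2.2 ∧
      v.1 % 2 = v.2.2 % 2 ∧
      (v.1 + 2 * v.2.1 + v.2.2) ^ 2 + 2 * v.1 ^ 2 + 2 * v.2.2 ^ 2 = 4 * m}.ncard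
      = 2 * L3 m := by
  have hset : {v : ℕ × ℕ × ℕ | 0 < v.1 ∧ 0 < v.2.1 ∧ 0 < v.2.2 ∧ v.1 ≠ v.2.2 ∧
      v.1 % 2 = v.2.2 % 2 ∧
      (v.1 + 2 * v.2.1 + v.2.2) ^ 2 + 2 * v.1 ^ 2 + 2 * v.2.2 ^ 2 = 4 * m}
      = Set.image su4F (su4S m) ∪ Set.image su4G (su4S m) := by
    ext ⟨a, b, c⟩
    simp only [Set.mem_setOf_eq, Set.mem_union, Set.mem_image]
    constructor
    · rintro ⟨ha, hb, hc, hne, hpar, heq⟩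
      rcases lt_or_gt_of_ne hne with h | h
      · left
        obtain ⟨x, rfl⟩ : ∃ x, c = a + 2 * x := ⟨(c - a) / 2, by omega⟩
        refine ⟨(x, a + x, a + x + b), ⟨by simp only; omega, by simp only; omega,
          by simp only; omega, by simp only; nlinarith⟩, ?_⟩
        simp only [su4F, Prod.mk.injEq]
        omega
      · right
        obtain ⟨x, rfl⟩ : ∃ x, a = c + 2 * x := ⟨(a - c) / 2, by omega⟩
        refine ⟨(x, c + x, c + x + b), ⟨by simp only; omega, by simp only; omega,
          by simp only; omega, by simp only; nlinarith⟩, ?_⟩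
        simp only [su4G, Prod.mk.injEq]
        omega
    · rintro (⟨⟨x, y, z⟩, ⟨h1, h2, h3, h4⟩, h⟩ | ⟨⟨x, y, z⟩, ⟨h1, h2, h3, h4⟩, h⟩)
      · simp only [su4F, Prod.mk.injEq] at h h1 h2 h3 h4
        obtain ⟨p, rfl⟩ := Nat.exists_eq_add_of_lt h2
        obtain ⟨q, rfl⟩ := Nat.exists_eq_add_of_lt h3
        obtain ⟨ha, hb, hc⟩ := h
        obtain rfl : a = p + 1 := by omega
        obtain rfl : b = q + 1 := by omega
        subst hc
        refine ⟨by omega, by omega, by omega, by omega, by omega, ?_⟩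
        rw [← h4]; ring
      · simp only [su4G, Prod.mk.injEq] at h h1 h2 h3 h4
        obtain ⟨p, rfl⟩ := Nat.exists_eq_add_of_lt h2
        obtain ⟨q, rfl⟩ := Nat.exists_eq_add_of_lt h3
        obtain ⟨ha, hb, hc⟩ := h
        obtain rfl : c = p + 1 := by omega
        obtain rfl : b = q + 1 := by omega
        subst ha
        refine ⟨by omega, by omega, by omega, by omega, by omega, ?_⟩
        rw [← h4]; ring
  have hdisj : Disjoint (Set.image su4F (su4S m)) (Set.image su4G (su4S m)) := by
    rw [Set.disjoint_left]
    rintro _ ⟨⟨x, y, z⟩, ⟨h1, h2, h3, h4⟩, rfl⟩ ⟨⟨u, v, w⟩, ⟨g1, g2, g3, g4⟩, h⟩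
    simp only [su4F, su4G, Prod.mk.injEq] at *
    omega
  rw [hset, Set.ncard_union_eq hdisj ((su4S_finite m).image _) ((su4S_finite m).image _),
    Set.ncard_image_of_injOn (su4F_inj m), Set.ncard_image_of_injOn (su4G_inj m), two_mul]
  rfl
end

section
/- Let k be a positive integer. If there exists a pair (ν₁, ν₂) of positive integers with ν₂ odd satisfying (2ν₁ + ν₂)² + ν₂² = k, then k ≡ 2 (mod 8), and the number of pairs (ν₁, ν₂) of positive integers with ν₂ odd satisfying this equation equals L₂(k). -/
theorem spin5_odd_case (k : ℕ) (hk : 0 < k)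
    (h : ∃ v : ℕ × ℕ, 0 < v.1 ∧ 0 < v.2 ∧ Odd v.2 ∧
      (2 * v.1 + v.2) ^ 2 + v.2 ^ 2 = k) :
    k % 8 = 2 ∧
    {v : ℕ × ℕ | 0 < v.1 ∧ 0 < v.2 ∧ Odd v.2 ∧
      (2 * v.1 + v.2) ^ 2 + v.2 ^ 2 = k}.ncard = L2 k := by
  have h8 : k % 8 = 2 := by
    obtain ⟨⟨a, b⟩, ha, hb, ho, he⟩ := h
    simp only at ha hb ho he
    rw [Nat.odd_iff] at ho
    have h1 := sq_mod_eight_cases (2 * a + b)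
    have h2 := sq_mod_eight_cases b
    omega
  refine ⟨h8, ?_⟩
  unfold L2
  refine Set.ncard_congr (fun v _ => (v.2, 2 * v.1 + v.2)) ?_ ?_ ?_
  · rintro ⟨a, b⟩ ⟨ha, hb, ho, he⟩
    simp only at ha hb ho he
    refine ⟨hb, ?_, ?_⟩
    · show b < 2 * a + b
      omega
    · show b ^ 2 + (2 * a + b) ^ 2 = k
      omega
  · rintro ⟨a, b⟩ ⟨c, d⟩ _ _ h
    simp only [Prod.mk.injEq] at h ⊢
    omega
  · rintro ⟨x, y⟩ ⟨hx, hxy, he⟩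
    simp only at hx hxy he
    have h1 := sq_mod_eight_cases x
    have h2 := sq_mod_eight_cases y
    have hy : 2 * ((y - x) / 2) + x = y := by omega
    refine ⟨((y - x) / 2, x), ⟨?_, hx, ?_, ?_⟩, ?_⟩
    · show 0 < (y - x) / 2
      omega
    · rw [Nat.odd_iff]
      show x % 2 = 1
      omega
    · show (2 * ((y - x) / 2) + x) ^ 2 + x ^ 2 = k
      rw [hy]
      omega
    · show (x, 2 * ((y - x) / 2) + x) = (x, y)
      rw [hy]
end
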